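/- Let φ(x) be a formula of the correspondence language with at most the free variable x. Then φ(x) is logically equivalent to the (1,1)-standard x-translation ST_11(I,x) of some modal intuitionistic formula I if and only if there exists k ∈ ℕ such that φ(x) is invariant with respect to (1,1)-modal k-asimulations. -/

import Mathlib

namespace ModalIntAsim

/-- Binary relation symbols of the correspondence vocabulary: R, R_□, R_◇. -/
inductive RelSym : Type
  | r | box | diam
deriving DecidableEq

/-- Formulas of the correspondence language: classical first-order logic without
identity, with variables indexed by `ℕ`, unary predicate letters `P n` (n : ℕ),
and the three binary relation symbols. -/
inductive FOForm : Type
  | falsum : FOForm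
  | pred : ℕ → ℕ → FOForm            -- `pred n v` is `P_n(x_v)`
  | rel : RelSym → ℕ → ℕ → FOForm    -- `rel s v w` is `S(x_v, x_w)`
  | conj : FOForm → FOForm → FOForm
  | disj : FOForm → FOForm → FOForm
  | impl : FOForm → FOForm → FOForm
  | all : ℕ → FOForm → FOForm
  | ex : ℕ → FOForm → FOForm

namespace FOForm

/-- Free variables of a correspondence formula. -/
def freeVars : FOForm → Finset ℕ
  | falsum => ∅
  | pred _ v => {v}
  | rel _ v w => {v, w}
  | conj f g => f.freeVars ∪ g.freeVars
  | disj f g => f.freeVars ∪ g.freeVars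
  | impl f g => f.freeVars ∪ g.freeVars
  | all v f => f.freeVars \ {v}
  | ex v f => f.freeVars \ {v}

/-- The unary predicate letters occurring in a formula (the binary relation
symbols R, R_□, R_◇ are regarded as belonging to every vocabulary Σ_φ). -/
def predLetters : FOForm → Finset ℕ
  | falsum => ∅
  | pred n _ => {n}
  | rel _ _ _ => ∅
  | conj f g => f.predLetters ∪ g.predLetters
  | disj f g => f.predLetters ∪ g.predLetters
  | impl f g => f.predLetters ∪ g.predLetters
  | all _ f => f.predLetters
  | ex _ f => f.predLetters

/-- Degree of a formula: the greatest number of nested quantifiers. -/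
def degree : FOForm → ℕ
  | falsum => 0
  | pred _ _ => 0
  | rel _ _ _ => 0
  | conj f g => max f.degree g.degree
  | disj f g => max f.degree g.degree
  | impl f g => max f.degree g.degree
  | all _ f => f.degree + 1
  | ex _ f => f.degree + 1

end FOForm

/-- A model of the correspondence language: a domain together with
interpretations of R, R_□, R_◇ and of the unary predicate letters.
(A Θ-model only consults the letters in Θ.) -/
structure Model : Type 1 where
  U : Type
  rel : U → U → Prop
  relBox : U → U → Prop
  relDiam : U → U → Prop
  pred : ℕ → U → Prop

/-- Interpretation of a binary relation symbol in a model. -/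
def Model.relOf (M : Model) : RelSym → M.U → M.U → Prop
  | .r => M.rel
  | .box => M.relBox
  | .diam => M.relDiam

/-- Tarskian satisfaction of a formula in a model under an assignment. -/
def Sat (M : Model) : FOForm → (ℕ → M.U) → Prop
  | .falsum, _ => False
  | .pred n v, α => M.pred n (α v)
  | .rel s v w, α => M.relOf s (α v) (α w)
  | .conj f g, α => Sat M f α ∧ Sat M g α
  | .disj f g, α => Sat M f α ∨ Sat M g α
  | .impl f g, α => Sat M f α → Sat M g α
  | .all v f, α => ∀ u : M.U, Sat M f (Function.update α v u)
  | .ex v f, α => ∃ u : M.U, Sat M f (Function.update α v u)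

/-- `M, a ⊨ φ(x)`: φ is true in `M` under any assignment sending `x` to `a`. -/
def SatAt (M : Model) (a : M.U) (x : ℕ) (φ : FOForm) : Prop :=
  ∀ α : ℕ → M.U, α x = a → Sat M φ α

/-- Logical equivalence of correspondence formulas. -/
def Equiv (φ ψ : FOForm) : Prop :=
  ∀ (M : Model) (α : ℕ → M.U), Sat M φ α ↔ Sat M ψ α

/-- Logical entailment between correspondence formulas. -/
def Entails (φ ψ : FOForm) : Prop :=
  ∀ (M : Model) (α : ℕ → M.U), Sat M φ α → Sat M ψ α

/-- Modal intuitionistic formulas: built from propositional letters `p n`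
using ⊥, ∧, ∨, →, □, ◇. -/
inductive MForm : Type
  | bot : MForm
  | prop : ℕ → MForm
  | conj : MForm → MForm → MForm
  | disj : MForm → MForm → MForm
  | impl : MForm → MForm → MForm
  | box : MForm → MForm
  | diam : MForm → MForm

/-- The (i,j)-standard x-translation `ST_ij`.  `boxOne = true` means the box
clause (□₁) is used (i = 1), `boxOne = false` means (□₂) (i = 2); likewise
`diamOne = true` means the diamond clause (◇₁) (j = 1) and `diamOne = false`
means (◇₂) (j = 2).  Bound variables are chosen fresh as `x+1`, `x+2`. -/
def ST (boxOne diamOne : Bool) : MForm → ℕ → FOForm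
  | .bot, _ => .falsum
  | .prop n, x => .pred n x
  | .conj I J, x => .conj (ST boxOne diamOne I x) (ST boxOne diamOne J x)
  | .disj I J, x => .disj (ST boxOne diamOne I x) (ST boxOne diamOne J x)
  | .impl I J, x =>
      .all (x + 1) (.impl (.rel .r x (x + 1))
        (.impl (ST boxOne diamOne I (x + 1)) (ST boxOne diamOne J (x + 1))))
  | .box I, x =>
      if boxOne then
        .all (x + 1) (.impl (.rel .box x (x + 1)) (ST boxOne diamOne I (x + 1)))
      else
        .all (x + 1) (.impl (.rel .r x (x + 1))
          (.all (x + 2) (.impl (.rel .box (x + 1) (x + 2)) (ST boxOne diamOne I (x + 2)))))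
  | .diam I, x =>
      if diamOne then
        .ex (x + 1) (.conj (.rel .diam x (x + 1)) (ST boxOne diamOne I (x + 1)))
      else
        .all (x + 1) (.impl (.rel .r x (x + 1))
          (.ex (x + 2) (.conj (.rel .diam (x + 1) (x + 2)) (ST boxOne diamOne I (x + 2)))))

/-! ### Conditions on relations between tuples (the k-asimulation conditions).
A relation between the two models is represented by its two directed
components; `N` is the model of the source tuple and `P` that of the target
tuple.  A tuple `(ā_m, a)` is represented as the list `as ++ [a]`, with
`m = as.length`. -/

section TupleConds

variable (N P : Model)

/-- The "p-type" condition: related tuples are nonempty and of equal length. -/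
def TypeCond (A : List N.U → List P.U → Prop) : Prop :=
  ∀ as bs, A as bs → as ≠ [] ∧ as.length = bs.length

/-- (p-base). -/
def BaseCond (Θ : Set ℕ) (A : List N.U → List P.U → Prop) : Prop :=
  ∀ (as : List N.U) (bs : List P.U) (a : N.U) (b : P.U),
    A (as ++ [a]) (bs ++ [b]) → ∀ n ∈ Θ, N.pred n a → P.pred n b

/-- (p-step). -/
def StepCond (k : ℕ) (A : List N.U → List P.U → Prop)
    (Arev : List P.U → List N.U → Prop) : Prop :=
  ∀ (as : List N.U) (bs : List P.U) (a : N.U) (b d : P.U),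
    A (as ++ [a]) (bs ++ [b]) → P.rel b d → as.length < k →
    ∃ c : N.U, N.rel a c ∧ A (as ++ [a, c]) (bs ++ [b, d]) ∧
      Arev (bs ++ [b, d]) (as ++ [a, c])

/-- (p-box-1). -/
def Box1Cond (k : ℕ) (A : List N.U → List P.U → Prop) : Prop :=
  ∀ (as : List N.U) (bs : List P.U) (a : N.U) (b d : P.U),
    A (as ++ [a]) (bs ++ [b]) → P.relBox b d → as.length < k →
    ∃ c : N.U, N.relBox a c ∧ A (as ++ [a, c]) (bs ++ [b, d])

/-- (p-box-2). -/
def Box2Cond (k : ℕ) (A : List N.U → List P.U → Prop) : Prop :=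
  ∀ (as : List N.U) (bs : List P.U) (a : N.U) (b d f : P.U),
    A (as ++ [a]) (bs ++ [b]) → P.rel b d → P.relBox d f → as.length + 1 < k →
    ∃ c e : N.U, N.rel a c ∧ N.relBox c e ∧ A (as ++ [a, c, e]) (bs ++ [b, d, f])

/-- (p-diam-1). -/
def Diam1Cond (k : ℕ) (A : List N.U → List P.U → Prop) : Prop :=
  ∀ (as : List N.U) (bs : List P.U) (a c : N.U) (b : P.U),
    A (as ++ [a]) (bs ++ [b]) → N.relDiam a c → as.length < k →
    ∃ d : P.U, P.relDiam b d ∧ A (as ++ [a, c]) (bs ++ [b, d])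

/-- (p-diam-2(1)). -/
def Diam2aCond (k : ℕ) (A B : List N.U → List P.U → Prop) : Prop :=
  ∀ (as : List N.U) (bs : List P.U) (a : N.U) (b d : P.U),
    A (as ++ [a]) (bs ++ [b]) → P.rel b d → as.length + 1 < k →
    ∃ c : N.U, N.rel a c ∧ B (as ++ [a, c]) (bs ++ [b, d])

/-- (p-diam-2(2)). -/
def Diam2bCond (k : ℕ) (B A : List N.U → List P.U → Prop) : Prop :=
  ∀ (as : List N.U) (bs : List P.U) (a c : N.U) (b : P.U),
    B (as ++ [a]) (bs ++ [b]) → N.relDiam a c → as.length < k →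
    ∃ d : P.U, P.relDiam b d ∧ A (as ++ [a, c]) (bs ++ [b, d])

end TupleConds

/-- An (i,1)-modal ⟨(M₁,t),(M₂,u)⟩_k-asimulation (j = 1): a single relation `A`
given by its two directed components `A12`, `A21`. -/
def IsKAsimD1 (boxOne : Bool) (Θ : Set ℕ) (M₁ M₂ : Model) (t : M₁.U) (u : M₂.U) (k : ℕ)
    (A12 : List M₁.U → List M₂.U → Prop) (A21 : List M₂.U → List M₁.U → Prop) : Prop :=
  TypeCond M₁ M₂ A12 ∧ TypeCond M₂ M₁ A21 ∧
  A12 [t] [u] ∧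
  BaseCond M₁ M₂ Θ A12 ∧ BaseCond M₂ M₁ Θ A21 ∧
  StepCond M₁ M₂ k A12 A21 ∧ StepCond M₂ M₁ k A21 A12 ∧
  (if boxOne then Box1Cond M₁ M₂ k A12 ∧ Box1Cond M₂ M₁ k A21
   else Box2Cond M₁ M₂ k A12 ∧ Box2Cond M₂ M₁ k A21) ∧
  Diam1Cond M₁ M₂ k A12 ∧ Diam1Cond M₂ M₁ k A21

/-- An (i,2)-modal ⟨(M₁,t),(M₂,u)⟩_k-asimulation (j = 2): an ordered pair
(A, B) of relations, each given by its two directed components. -/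
def IsKAsimD2 (boxOne : Bool) (Θ : Set ℕ) (M₁ M₂ : Model) (t : M₁.U) (u : M₂.U) (k : ℕ)
    (A12 : List M₁.U → List M₂.U → Prop) (A21 : List M₂.U → List M₁.U → Prop)
    (B12 : List M₁.U → List M₂.U → Prop) (B21 : List M₂.U → List M₁.U → Prop) : Prop :=
  TypeCond M₁ M₂ A12 ∧ TypeCond M₂ M₁ A21 ∧
  TypeCond M₁ M₂ B12 ∧ TypeCond M₂ M₁ B21 ∧
  A12 [t] [u] ∧
  BaseCond M₁ M₂ Θ A12 ∧ BaseCond M₂ M₁ Θ A21 ∧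
  StepCond M₁ M₂ k A12 A21 ∧ StepCond M₂ M₁ k A21 A12 ∧
  (if boxOne then Box1Cond M₁ M₂ k A12 ∧ Box1Cond M₂ M₁ k A21
   else Box2Cond M₁ M₂ k A12 ∧ Box2Cond M₂ M₁ k A21) ∧
  Diam2aCond M₁ M₂ k A12 B12 ∧ Diam2aCond M₂ M₁ k A21 B21 ∧
  Diam2bCond M₁ M₂ k B12 A12 ∧ Diam2bCond M₂ M₁ k B21 A21

/-- φ(x) is invariant with respect to (i,1)-modal k-asimulations. -/
def KInvariantD1 (boxOne : Bool) (x : ℕ) (φ : FOForm) (k : ℕ) : Prop :=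
  ∀ Θ : Set ℕ, (φ.predLetters : Set ℕ) ⊆ Θ →
  ∀ (M₁ M₂ : Model) (t : M₁.U) (u : M₂.U)
    (A12 : List M₁.U → List M₂.U → Prop) (A21 : List M₂.U → List M₁.U → Prop),
    IsKAsimD1 boxOne Θ M₁ M₂ t u k A12 A21 →
    ∀ (a : M₁.U) (b : M₂.U), A12 [a] [b] → SatAt M₁ a x φ → SatAt M₂ b x φ

/-- φ(x) is invariant with respect to (i,2)-modal k-asimulations. -/
def KInvariantD2 (boxOne : Bool) (x : ℕ) (φ : FOForm) (k : ℕ) : Prop :=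
  ∀ Θ : Set ℕ, (φ.predLetters : Set ℕ) ⊆ Θ →
  ∀ (M₁ M₂ : Model) (t : M₁.U) (u : M₂.U)
    (A12 : List M₁.U → List M₂.U → Prop) (A21 : List M₂.U → List M₁.U → Prop)
    (B12 : List M₁.U → List M₂.U → Prop) (B21 : List M₂.U → List M₁.U → Prop),
    IsKAsimD2 boxOne Θ M₁ M₂ t u k A12 A21 B12 B21 →
    ∀ (a : M₁.U) (b : M₂.U), A12 [a] [b] → SatAt M₁ a x φ → SatAt M₂ b x φ

/-! ### Conditions for asimulations *simpliciter* (relations between elements). -/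

section ElemConds

variable (N P : Model)

/-- (base). -/
def BaseCondE (Θ : Set ℕ) (A : N.U → P.U → Prop) : Prop :=
  ∀ (a : N.U) (b : P.U), A a b → ∀ n ∈ Θ, N.pred n a → P.pred n b

/-- (step). -/
def StepCondE (A : N.U → P.U → Prop) (Arev : P.U → N.U → Prop) : Prop :=
  ∀ (a : N.U) (b d : P.U), A a b → P.rel b d →
    ∃ c : N.U, N.rel a c ∧ A c d ∧ Arev d c

/-- (box-1). -/
def Box1CondE (A : N.U → P.U → Prop) : Prop :=
  ∀ (a : N.U) (b d : P.U), A a b → P.relBox b d →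
    ∃ c : N.U, N.relBox a c ∧ A c d

/-- (box-2). -/
def Box2CondE (A : N.U → P.U → Prop) : Prop :=
  ∀ (a : N.U) (b d f : P.U), A a b → P.rel b d → P.relBox d f →
    ∃ c e : N.U, N.rel a c ∧ N.relBox c e ∧ A e f

/-- (diam-1). -/
def Diam1CondE (A : N.U → P.U → Prop) : Prop :=
  ∀ (a c : N.U) (b : P.U), A a b → N.relDiam a c →
    ∃ d : P.U, P.relDiam b d ∧ A c d

/-- (diam-2(1)). -/
def Diam2aCondE (A B : N.U → P.U → Prop) : Prop :=
  ∀ (a : N.U) (b d : P.U), A a b → P.rel b d →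
    ∃ c : N.U, N.rel a c ∧ B c d

/-- (diam-2(2)). -/
def Diam2bCondE (B A : N.U → P.U → Prop) : Prop :=
  ∀ (a c : N.U) (b : P.U), B a b → N.relDiam a c →
    ∃ d : P.U, P.relDiam b d ∧ A c d

end ElemConds

/-- An (i,1)-modal ⟨(M₁,t),(M₂,u)⟩-asimulation (j = 1). -/
def IsAsimD1 (boxOne : Bool) (Θ : Set ℕ) (M₁ M₂ : Model) (t : M₁.U) (u : M₂.U)
    (A12 : M₁.U → M₂.U → Prop) (A21 : M₂.U → M₁.U → Prop) : Prop :=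
  A12 t u ∧
  BaseCondE M₁ M₂ Θ A12 ∧ BaseCondE M₂ M₁ Θ A21 ∧
  StepCondE M₁ M₂ A12 A21 ∧ StepCondE M₂ M₁ A21 A12 ∧
  (if boxOne then Box1CondE M₁ M₂ A12 ∧ Box1CondE M₂ M₁ A21
   else Box2CondE M₁ M₂ A12 ∧ Box2CondE M₂ M₁ A21) ∧
  Diam1CondE M₁ M₂ A12 ∧ Diam1CondE M₂ M₁ A21

/-- An (i,2)-modal ⟨(M₁,t),(M₂,u)⟩-asimulation (j = 2). -/
def IsAsimD2 (boxOne : Bool) (Θ : Set ℕ) (M₁ M₂ : Model) (t : M₁.U) (u : M₂.U)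
    (A12 : M₁.U → M₂.U → Prop) (A21 : M₂.U → M₁.U → Prop)
    (B12 : M₁.U → M₂.U → Prop) (B21 : M₂.U → M₁.U → Prop) : Prop :=
  A12 t u ∧
  BaseCondE M₁ M₂ Θ A12 ∧ BaseCondE M₂ M₁ Θ A21 ∧
  StepCondE M₁ M₂ A12 A21 ∧ StepCondE M₂ M₁ A21 A12 ∧
  (if boxOne then Box1CondE M₁ M₂ A12 ∧ Box1CondE M₂ M₁ A21
   else Box2CondE M₁ M₂ A12 ∧ Box2CondE M₂ M₁ A21) ∧
  Diam2aCondE M₁ M₂ A12 B12 ∧ Diam2aCondE M₂ M₁ A21 B21 ∧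
  Diam2bCondE M₁ M₂ B12 A12 ∧ Diam2bCondE M₂ M₁ B21 A21

/-- φ(x) is invariant with respect to (i,1)-modal asimulations. -/
def InvariantD1 (boxOne : Bool) (x : ℕ) (φ : FOForm) : Prop :=
  ∀ Θ : Set ℕ, (φ.predLetters : Set ℕ) ⊆ Θ →
  ∀ (M₁ M₂ : Model) (t : M₁.U) (u : M₂.U)
    (A12 : M₁.U → M₂.U → Prop) (A21 : M₂.U → M₁.U → Prop),
    IsAsimD1 boxOne Θ M₁ M₂ t u A12 A21 →
    ∀ (a : M₁.U) (b : M₂.U), A12 a b → SatAt M₁ a x φ → SatAt M₂ b x φ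

/-- φ(x) is invariant with respect to (i,2)-modal asimulations. -/
def InvariantD2 (boxOne : Bool) (x : ℕ) (φ : FOForm) : Prop :=
  ∀ Θ : Set ℕ, (φ.predLetters : Set ℕ) ⊆ Θ →
  ∀ (M₁ M₂ : Model) (t : M₁.U) (u : M₂.U)
    (A12 : M₁.U → M₂.U → Prop) (A21 : M₂.U → M₁.U → Prop)
    (B12 : M₁.U → M₂.U → Prop) (B21 : M₂.U → M₁.U → Prop),
    IsAsimD2 boxOne Θ M₁ M₂ t u A12 A21 B12 B21 →
    ∀ (a : M₁.U) (b : M₂.U), A12 a b → SatAt M₁ a x φ → SatAt M₂ b x φ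

/-! ### Types, complete conjunctions, ω-saturation. -/

/-- `int(φ,x,l)`: the set of (2,2)-standard x-translations of modal
intuitionistic formulas which are (Σ_φ,x,l)-formulas. -/
def intSet (φ : FOForm) (x l : ℕ) : Set FOForm :=
  {ψ | (∃ I : MForm, ψ = ST false false I x) ∧
    ψ.predLetters ⊆ φ.predLetters ∧ ψ.freeVars ⊆ {x} ∧ ψ.degree ≤ l}

/-- `tp_l(φ(x),M,a)`. -/
def tpSet (φ : FOForm) (x l : ℕ) (M : Model) (a : M.U) : Set FOForm :=
  {ψ | ψ ∈ intSet φ x l ∧ SatAt M a x ψ}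

/-- Conjunction of a nonempty list of formulas. -/
def listConj : FOForm → List FOForm → FOForm
  | ψ, [] => ψ
  | ψ, χ :: L => FOForm.conj ψ (listConj χ L)

/-- Ψ(x) is a complete (φ,x,k)-conjunction. -/
def IsCompleteConj (φ : FOForm) (x k : ℕ) (Ψ : FOForm) : Prop :=
  (∃ (ψ₀ : FOForm) (L : List FOForm), ψ₀ ∈ intSet φ x k ∧
    (∀ χ ∈ L, χ ∈ intSet φ x k) ∧ Ψ = listConj ψ₀ L) ∧
  ∃ (M : Model) (a : M.U), SatAt M a x (FOForm.conj Ψ φ) ∧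
    ∀ ψ ∈ tpSet φ x k M a, Entails Ψ ψ

/-- `int_x(Θ)` for the (i,j)-standard translation. -/
def intX (Θ : Set ℕ) (boxOne diamOne : Bool) (x : ℕ) : Set FOForm :=
  {ψ | (∃ I : MForm, ψ = ST boxOne diamOne I x) ∧ (ψ.predLetters : Set ℕ) ⊆ Θ}

/-- `tp_x(M,t)` for the (i,j)-standard translation. -/
def tpX (Θ : Set ℕ) (boxOne diamOne : Bool) (x : ℕ) (M : Model) (t : M.U) : Set FOForm :=
  {ψ | ψ ∈ intX Θ boxOne diamOne x ∧ SatAt M t x ψ}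

/-- `imp_x(M,t) = ⋂ { t̄p_x(M,u) : t R_◇ u }` (for the (2,2)-translation). -/
def impX (Θ : Set ℕ) (x : ℕ) (M : Model) (t : M.U) : Set FOForm :=
  {ψ | ψ ∈ intX Θ false false x ∧ ∀ u : M.U, M.relDiam t u → ¬ SatAt M u x ψ}

/-- ω-saturation: for every finite tuple of parameters (the first `n` values of
an assignment `α`) and every set `Γ` of formulas with finitely many free
variables beyond the parameters, if `Γ` is consistent with the first-order
theory of `[M,ā]` (i.e. satisfiable together with it in some model), then `Γ`
is realized in `[M,ā]`. -/
def OmegaSaturated (M : Model) : Prop :=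
  ∀ (n : ℕ) (α : ℕ → M.U) (Γ : Set FOForm),
    (∃ k : ℕ, ∀ γ ∈ Γ, γ.freeVars ⊆ Finset.range (n + k)) →
    (∃ (N : Model) (β : ℕ → N.U),
      (∀ ψ : FOForm, ψ.freeVars ⊆ Finset.range n → Sat M ψ α → Sat N ψ β) ∧
      ∀ γ ∈ Γ, Sat N γ β) →
    ∃ α' : ℕ → M.U, (∀ i < n, α' i = α i) ∧ ∀ γ ∈ Γ, Sat M γ α'

/-! ### Relativization to a class κ of models. -/

/-- κ(Θ) is first-order axiomatizable for every finite Θ (with R ∈ Θ): for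
every finite set `S` of unary predicate letters there is a set of Θ-sentences
axiomatizing membership in κ. -/
def FinAxiomatizable (κ : Set Model) : Prop :=
  ∀ S : Finset ℕ, ∃ Ax : Set FOForm,
    (∀ ψ ∈ Ax, ψ.freeVars = ∅ ∧ (ψ.predLetters : Set ℕ) ⊆ (S : Set ℕ)) ∧
    ∀ M : Model, M ∈ κ ↔ ∀ ψ ∈ Ax, ∀ α : ℕ → M.U, Sat M ψ α

/-- φ κ-follows from ψ: {ψ, ¬φ} is not κ-satisfiable. -/
def KappaFollows (κ : Set Model) (ψ φ : FOForm) : Prop :=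
  ¬ ∃ M : Model, M ∈ κ ∧ ∃ α : ℕ → M.U, Sat M ψ α ∧ ¬ Sat M φ α

/-- κ-equivalence of formulas. -/
def KappaEquiv (κ : Set Model) (φ ψ : FOForm) : Prop :=
  KappaFollows κ φ ψ ∧ KappaFollows κ ψ φ

/-- φ(x) is κ-invariant with respect to (i,1)-modal asimulations. -/
def KappaInvariantD1 (κ : Set Model) (boxOne : Bool) (x : ℕ) (φ : FOForm) : Prop :=
  ∀ Θ : Set ℕ, (φ.predLetters : Set ℕ) ⊆ Θ →
  ∀ (M₁ M₂ : Model), M₁ ∈ κ → M₂ ∈ κ →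
  ∀ (t : M₁.U) (u : M₂.U)
    (A12 : M₁.U → M₂.U → Prop) (A21 : M₂.U → M₁.U → Prop),
    IsAsimD1 boxOne Θ M₁ M₂ t u A12 A21 →
    ∀ (a : M₁.U) (b : M₂.U), A12 a b → SatAt M₁ a x φ → SatAt M₂ b x φ

/-- φ(x) is κ-invariant with respect to (i,2)-modal asimulations. -/
def KappaInvariantD2 (κ : Set Model) (boxOne : Bool) (x : ℕ) (φ : FOForm) : Prop :=
  ∀ Θ : Set ℕ, (φ.predLetters : Set ℕ) ⊆ Θ →
  ∀ (M₁ M₂ : Model), M₁ ∈ κ → M₂ ∈ κ →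
  ∀ (t : M₁.U) (u : M₂.U)
    (A12 : M₁.U → M₂.U → Prop) (A21 : M₂.U → M₁.U → Prop)
    (B12 : M₁.U → M₂.U → Prop) (B21 : M₂.U → M₁.U → Prop),
    IsAsimD2 boxOne Θ M₁ M₂ t u A12 A21 B12 B21 →
    ∀ (a : M₁.U) (b : M₂.U), A12 a b → SatAt M₁ a x φ → SatAt M₂ b x φ

/-- φ(x) is κ-invariant with respect to (i,j)-modal asimulations
(`diamOne = true` means j = 1). -/
def KappaInvariant (κ : Set Model) (boxOne diamOne : Bool) (x : ℕ) (φ : FOForm) : Prop :=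
  if diamOne then KappaInvariantD1 κ boxOne x φ else KappaInvariantD2 κ boxOne x φ



/-! ### Helper development for the proof -/

/-- Direct Kripke semantics matching `ST true true`. -/
def MSat (M : Model) : MForm → M.U → Prop
  | .bot, _ => False
  | .prop n, a => M.pred n a
  | .conj I J, a => MSat M I a ∧ MSat M J a
  | .disj I J, a => MSat M I a ∨ MSat M J a
  | .impl I J, a => ∀ c, M.rel a c → MSat M I c → MSat M J c
  | .box I, a => ∀ c, M.relBox a c → MSat M I c
  | .diam I, a => ∃ c, M.relDiam a c ∧ MSat M I c

theorem sat_ST (M : Model) (I : MForm) :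
    ∀ (x : ℕ) (α : ℕ → M.U), Sat M (ST true true I x) α ↔ MSat M I (α x) := by
  induction I with
  | bot => intro x α; simp [ST, Sat, MSat]
  | prop n => intro x α; simp [ST, Sat, MSat]
  | conj I J hI hJ => intro x α; simp [ST, Sat, MSat, hI, hJ]
  | disj I J hI hJ => intro x α; simp [ST, Sat, MSat, hI, hJ]
  | impl I J hI hJ => intro x α; simp [ST, Sat, MSat, hI, hJ, Model.relOf]
  | box I hI => intro x α; simp [ST, Sat, MSat, hI, Model.relOf]
  | diam I hI => intro x α; simp [ST, Sat, MSat, hI, Model.relOf]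

theorem sat_congr (M : Model) (φ : FOForm) :
    ∀ (α β : ℕ → M.U), (∀ v ∈ φ.freeVars, α v = β v) → (Sat M φ α ↔ Sat M φ β) := by
  induction φ with
  | falsum => intro α β _; simp [Sat]
  | pred n v => intro α β h; simp [Sat, h v (by simp [FOForm.freeVars])]
  | rel s v w =>
    intro α β h
    simp [Sat, h v (by simp [FOForm.freeVars]), h w (by simp [FOForm.freeVars])]
  | conj f g hf hg =>
    intro α β h
    simp only [Sat]
    rw [hf α β fun v hv => h v (by simp [FOForm.freeVars, hv]),
      hg α β fun v hv => h v (by simp [FOForm.freeVars, hv])]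
  | disj f g hf hg =>
    intro α β h
    simp only [Sat]
    rw [hf α β fun v hv => h v (by simp [FOForm.freeVars, hv]),
      hg α β fun v hv => h v (by simp [FOForm.freeVars, hv])]
  | impl f g hf hg =>
    intro α β h
    simp only [Sat]
    rw [hf α β fun v hv => h v (by simp [FOForm.freeVars, hv]),
      hg α β fun v hv => h v (by simp [FOForm.freeVars, hv])]
  | all v f hf =>
    intro α β h
    simp only [Sat]
    refine forall_congr' fun u => hf _ _ fun w hw => ?_
    by_cases hwv : w = v
    · subst hwv; simp
    · simp [Function.update_of_ne hwv, h w (by simp [FOForm.freeVars, hw, hwv])]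
  | ex v f hf =>
    intro α β h
    simp only [Sat]
    refine exists_congr fun u => hf _ _ fun w hw => ?_
    by_cases hwv : w = v
    · subst hwv; simp
    · simp [Function.update_of_ne hwv, h w (by simp [FOForm.freeVars, hw, hwv])]

/-- Make all letters outside `S` false. -/
def restrictModel (S : Finset ℕ) (M : Model) : Model where
  U := M.U
  rel := M.rel
  relBox := M.relBox
  relDiam := M.relDiam
  pred := fun n a => n ∈ S ∧ M.pred n a

theorem sat_restrict (S : Finset ℕ) (M : Model) (φ : FOForm) :
    φ.predLetters ⊆ S →
      ∀ α : ℕ → M.U, (Sat (restrictModel S M) φ α ↔ Sat M φ α) := by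
  induction φ with
  | falsum => intro _ α; simp [Sat]
  | pred n v =>
    intro h α
    have : n ∈ S := h (by simp [FOForm.predLetters])
    simp [Sat, restrictModel, this]
  | rel s v w => intro h α; cases s <;> exact Iff.rfl
  | conj f g hf hg =>
    intro h α
    simp only [FOForm.predLetters, Finset.union_subset_iff] at h
    exact and_congr (hf h.1 α) (hg h.2 α)
  | disj f g hf hg =>
    intro h α
    simp only [FOForm.predLetters, Finset.union_subset_iff] at h
    exact or_congr (hf h.1 α) (hg h.2 α)
  | impl f g hf hg =>
    intro h α
    simp only [FOForm.predLetters, Finset.union_subset_iff] at h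
    exact imp_congr (hf h.1 α) (hg h.2 α)
  | all v f hf => intro h α; exact forall_congr' fun u => hf h _
  | ex v f hf => intro h α; exact exists_congr fun u => hf h _

/-- Replace letters outside `S` by falsum. -/
def cutM (S : Finset ℕ) : MForm → MForm
  | .bot => .bot
  | .prop n => if n ∈ S then .prop n else .bot
  | .conj I J => .conj (cutM S I) (cutM S J)
  | .disj I J => .disj (cutM S I) (cutM S J)
  | .impl I J => .impl (cutM S I) (cutM S J)
  | .box I => .box (cutM S I)
  | .diam I => .diam (cutM S I)

theorem msat_cut (S : Finset ℕ) (M : Model) (I : MForm) :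
    ∀ a : M.U, MSat (restrictModel S M) I a ↔ MSat M (cutM S I) a := by
  induction I with
  | bot => intro a; exact Iff.rfl
  | prop n => intro a; by_cases h : n ∈ S <;> simp [MSat, cutM, restrictModel, h]
  | conj I J hI hJ => intro a; exact and_congr (hI a) (hJ a)
  | disj I J hI hJ => intro a; exact or_congr (hI a) (hJ a)
  | impl I J hI hJ =>
    intro a
    exact forall_congr' fun c => imp_congr Iff.rfl (imp_congr (hI c) (hJ c))
  | box I hI => intro a; exact forall_congr' fun c => imp_congr Iff.rfl (hI c)
  | diam I hI => intro a; exact exists_congr fun c => and_congr Iff.rfl (hI c)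

/-- Modal depth. -/
def mdepth : MForm → ℕ
  | .bot => 0
  | .prop _ => 0
  | .conj I J => max (mdepth I) (mdepth J)
  | .disj I J => max (mdepth I) (mdepth J)
  | .impl I J => max (mdepth I) (mdepth J) + 1
  | .box I => mdepth I + 1
  | .diam I => mdepth I + 1

theorem asim_preserve (S : Finset ℕ) (Θ : Set ℕ) (hΘ : (S : Set ℕ) ⊆ Θ) (k : ℕ) (I : MForm) :
    ∀ (N P : Model) (A : List N.U → List P.U → Prop) (B : List P.U → List N.U → Prop),
      TypeCond N P A → TypeCond P N B → BaseCond N P Θ A → BaseCond P N Θ B →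
      StepCond N P k A B → StepCond P N k B A → Box1Cond N P k A → Box1Cond P N k B →
      Diam1Cond N P k A → Diam1Cond P N k B →
      ∀ (as : List N.U) (bs : List P.U) (a : N.U) (b : P.U),
        A (as ++ [a]) (bs ++ [b]) → as.length + mdepth I ≤ k →
        MSat N (cutM S I) a → MSat P (cutM S I) b := by
  induction I with
  | bot => intros; assumption
  | prop n =>
    intro N P A B _ _ hb _ _ _ _ _ _ _ as bs a b hA _ h
    by_cases hn : n ∈ S
    · simp only [cutM, hn, if_true, MSat] at h ⊢
      exact hb as bs a b hA n (hΘ hn) h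
    · simp [cutM, hn, MSat] at h
  | conj I J hI hJ =>
    intro N P A B h1 h2 h3 h4 h5 h6 h7 h8 h9 h10 as bs a b hA hk h
    simp only [mdepth] at hk
    exact ⟨hI N P A B h1 h2 h3 h4 h5 h6 h7 h8 h9 h10 as bs a b hA (by omega) h.1,
      hJ N P A B h1 h2 h3 h4 h5 h6 h7 h8 h9 h10 as bs a b hA (by omega) h.2⟩
  | disj I J hI hJ =>
    intro N P A B h1 h2 h3 h4 h5 h6 h7 h8 h9 h10 as bs a b hA hk h
    simp only [mdepth] at hk
    exact h.imp (hI N P A B h1 h2 h3 h4 h5 h6 h7 h8 h9 h10 as bs a b hA (by omega))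
      (hJ N P A B h1 h2 h3 h4 h5 h6 h7 h8 h9 h10 as bs a b hA (by omega))
  | impl I J hI hJ =>
    intro N P A B h1 h2 h3 h4 h5 h6 h7 h8 h9 h10 as bs a b hA hk h d hbd hId
    simp only [mdepth] at hk
    have hlen := (h1 _ _ hA).2
    simp only [List.length_append, List.length_singleton] at hlen
    obtain ⟨c, hac, hA', hB'⟩ := h5 as bs a b d hA hbd (by omega)
    have e1 : as ++ [a, c] = (as ++ [a]) ++ [c] := by simp
    have e2 : bs ++ [b, d] = (bs ++ [b]) ++ [d] := by simp
    rw [e1, e2] at hA' hB'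
    refine hJ N P A B h1 h2 h3 h4 h5 h6 h7 h8 h9 h10 _ _ c d hA' ?_ (h c hac ?_)
    · simp only [List.length_append, List.length_singleton]; omega
    · refine hI P N B A h2 h1 h4 h3 h6 h5 h8 h7 h10 h9 _ _ d c hB' ?_ hId
      simp only [List.length_append, List.length_singleton]; omega
  | box I hI =>
    intro N P A B h1 h2 h3 h4 h5 h6 h7 h8 h9 h10 as bs a b hA hk h d hbd
    simp only [mdepth] at hk
    obtain ⟨c, hac, hA'⟩ := h7 as bs a b d hA hbd (by omega)
    have e1 : as ++ [a, c] = (as ++ [a]) ++ [c] := by simp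
    have e2 : bs ++ [b, d] = (bs ++ [b]) ++ [d] := by simp
    rw [e1, e2] at hA'
    refine hI N P A B h1 h2 h3 h4 h5 h6 h7 h8 h9 h10 _ _ c d hA' ?_ (h c hac)
    simp only [List.length_append, List.length_singleton]; omega
  | diam I hI =>
    intro N P A B h1 h2 h3 h4 h5 h6 h7 h8 h9 h10 as bs a b hA hk h
    simp only [mdepth] at hk
    obtain ⟨c, hac, hc⟩ := h
    obtain ⟨d, hbd, hA'⟩ := h9 as bs a c b hA hac (by omega)
    have e1 : as ++ [a, c] = (as ++ [a]) ++ [c] := by simp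
    have e2 : bs ++ [b, d] = (bs ++ [b]) ++ [d] := by simp
    rw [e1, e2] at hA'
    refine ⟨d, hbd, hI N P A B h1 h2 h3 h4 h5 h6 h7 h8 h9 h10 _ _ c d hA' ?_ hc⟩
    simp only [List.length_append, List.length_singleton]; omega

/-- Finite types of depth `n` over the letters in `S`. -/
def BT (S : Finset ℕ) : ℕ → Type
  | 0 => Set S
  | n + 1 => Set S × Set (BT S n) × Set (BT S n) × Set (BT S n)

theorem BT_finite (S : Finset ℕ) : ∀ n, Finite (BT S n)
  | 0 => inferInstanceAs (Finite (Set S))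
  | n + 1 => by
    have := BT_finite S n
    exact inferInstanceAs (Finite (Set S × Set (BT S n) × Set (BT S n) × Set (BT S n)))

/-- The depth-`n` bisimulation type of a point. -/
def btp (S : Finset ℕ) : (n : ℕ) → (M : Model) → M.U → BT S n
  | 0, M, a => ({i | M.pred i.1 a} : Set S)
  | n + 1, M, a => (({i | M.pred i.1 a} : Set S), {τ | ∃ c, M.rel a c ∧ btp S n M c = τ},
      {τ | ∃ c, M.relBox a c ∧ btp S n M c = τ}, {τ | ∃ c, M.relDiam a c ∧ btp S n M c = τ})

/-- Formulas whose truth depends only on the depth-`n` type. -/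
def KF (S : Finset ℕ) (n : ℕ) (I : MForm) : Prop :=
  ∀ (M N : Model) (a : M.U) (b : N.U), btp S n M a = btp S n N b → MSat M I a → MSat N I b

theorem KF_bot (S : Finset ℕ) (n : ℕ) : KF S n .bot := fun _ _ _ _ _ h => h

theorem KF_top (S : Finset ℕ) (n : ℕ) : KF S n (.impl .bot .bot) :=
  fun _ _ _ _ _ _ _ _ h => h

theorem KF_conj {S : Finset ℕ} {n : ℕ} {I J : MForm} (hI : KF S n I) (hJ : KF S n J) :
    KF S n (.conj I J) :=
  fun M N a b e h => ⟨hI M N a b e h.1, hJ M N a b e h.2⟩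

theorem KF_disj {S : Finset ℕ} {n : ℕ} {I J : MForm} (hI : KF S n I) (hJ : KF S n J) :
    KF S n (.disj I J) :=
  fun M N a b e h => h.imp (hI M N a b e) (hJ M N a b e)

theorem KF_prop {S : Finset ℕ} {n i : ℕ} (hi : i ∈ S) : KF S n (.prop i) := by
  intro M N a b e h
  cases n with
  | zero =>
    have e' : ({j : S | M.pred j.1 a} : Set S) = {j : S | N.pred j.1 b} := e
    exact (Set.ext_iff.1 e' ⟨i, hi⟩).1 h
  | succ n =>
    have e' : ({j : S | M.pred j.1 a} : Set S) = {j : S | N.pred j.1 b} := congrArg Prod.fst e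
    exact (Set.ext_iff.1 e' ⟨i, hi⟩).1 h

theorem KF_impl {S : Finset ℕ} {n : ℕ} {I J : MForm} (hI : KF S n I) (hJ : KF S n J) :
    KF S (n + 1) (.impl I J) := by
  intro M N a b e h d hd hId
  have e' : {τ | ∃ c, M.rel a c ∧ btp S n M c = τ} = {τ | ∃ c, N.rel b c ∧ btp S n N c = τ} :=
    congrArg (fun p => p.2.1) e
  obtain ⟨c, hc, hcd⟩ := (Set.ext_iff.1 e' (btp S n N d)).2 ⟨d, hd, rfl⟩
  exact hJ M N c d hcd (h c hc (hI N M d c hcd.symm hId))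

theorem KF_box {S : Finset ℕ} {n : ℕ} {I : MForm} (hI : KF S n I) :
    KF S (n + 1) (.box I) := by
  intro M N a b e h d hd
  have e' : {τ | ∃ c, M.relBox a c ∧ btp S n M c = τ} =
      {τ | ∃ c, N.relBox b c ∧ btp S n N c = τ} := congrArg (fun p => p.2.2.1) e
  obtain ⟨c, hc, hcd⟩ := (Set.ext_iff.1 e' (btp S n N d)).2 ⟨d, hd, rfl⟩
  exact hI M N c d hcd (h c hc)

theorem KF_diam {S : Finset ℕ} {n : ℕ} {I : MForm} (hI : KF S n I) :
    KF S (n + 1) (.diam I) := by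
  rintro M N a b e ⟨c, hc, hIc⟩
  have e' : {τ | ∃ c, M.relDiam a c ∧ btp S n M c = τ} =
      {τ | ∃ c, N.relDiam b c ∧ btp S n N c = τ} := congrArg (fun p => p.2.2.2) e
  obtain ⟨d, hd, hcd⟩ := (Set.ext_iff.1 e' (btp S n M c)).1 ⟨c, hc, rfl⟩
  exact ⟨d, hd, hI M N c d hcd.symm hIc⟩

/-- The set of types satisfying a formula. -/
def extM (S : Finset ℕ) (n : ℕ) (I : MForm) : Set (BT S n) :=
  {τ | ∃ (M : Model) (a : M.U), btp S n M a = τ ∧ MSat M I a}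

theorem mem_extM {S : Finset ℕ} {n : ℕ} {I : MForm} (hI : KF S n I) (M : Model) (a : M.U) :
    btp S n M a ∈ extM S n I ↔ MSat M I a :=
  ⟨fun ⟨N, b, e, h⟩ => hI N M b a e h, fun h => ⟨M, a, rfl, h⟩⟩

theorem msat_of_ext {S : Finset ℕ} {n : ℕ} {I J : MForm} (hI : KF S n I) (hJ : KF S n J)
    (e : extM S n I = extM S n J) (M : Model) (a : M.U) : MSat M I a ↔ MSat M J a := by
  rw [← mem_extM hI, ← mem_extM hJ, e]

theorem bigConj (S : Finset ℕ) (n : ℕ) (F : MForm → Prop) :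
    ∃ C, KF S n C ∧ ∀ (M : Model) (a : M.U),
      MSat M C a ↔ ∀ I, KF S n I → F I → MSat M I a := by
  have := BT_finite S n
  have key : ∀ X : Set (Set (BT S n)), X.Finite → ∃ C, KF S n C ∧ ∀ (M : Model) (a : M.U),
      MSat M C a ↔ ∀ I, KF S n I → F I → extM S n I ∈ X → MSat M I a := by
    intro X hX
    induction X, hX using Set.Finite.induction_on with
    | empty => exact ⟨_, KF_top S n, fun M a => ⟨fun _ _ _ _ h => h.elim, fun _ _ _ h => h⟩⟩
    | @insert Y X _ _ ih =>
      obtain ⟨C, hC, hCs⟩ := ih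
      by_cases hY : ∃ J, KF S n J ∧ F J ∧ extM S n J = Y
      · obtain ⟨J, hJ, hFJ, hJY⟩ := hY
        refine ⟨.conj C J, KF_conj hC hJ, fun M a => ⟨?_, ?_⟩⟩
        · rintro ⟨h1, h2⟩ I hI hF (hm | hm)
          · exact (msat_of_ext hI hJ (hm.trans hJY.symm) M a).2 h2
          · exact (hCs M a).1 h1 I hI hF hm
        · intro h
          exact ⟨(hCs M a).2 fun I hI hF hm => h I hI hF (Or.inr hm), h J hJ hFJ (Or.inl hJY)⟩
      · refine ⟨C, hC, fun M a => (hCs M a).trans ⟨?_, ?_⟩⟩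
        · rintro h I hI hF (hm | hm)
          · exact (hY ⟨I, hI, hF, hm⟩).elim
          · exact h I hI hF hm
        · exact fun h I hI hF hm => h I hI hF (Or.inr hm)
  obtain ⟨C, hC, h⟩ := key Set.univ Set.finite_univ
  exact ⟨C, hC, fun M a => by simpa using h M a⟩

theorem bigDisj (S : Finset ℕ) (n : ℕ) (F : MForm → Prop) :
    ∃ C, KF S n C ∧ ∀ (M : Model) (a : M.U),
      MSat M C a ↔ ∃ I, KF S n I ∧ F I ∧ MSat M I a := by
  have := BT_finite S n
  have key : ∀ X : Set (Set (BT S n)), X.Finite → ∃ C, KF S n C ∧ ∀ (M : Model) (a : M.U),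
      MSat M C a ↔ ∃ I, KF S n I ∧ F I ∧ extM S n I ∈ X ∧ MSat M I a := by
    intro X hX
    induction X, hX using Set.Finite.induction_on with
    | empty =>
      exact ⟨_, KF_bot S n, fun M a => ⟨fun h => h.elim, fun ⟨_, _, _, h, _⟩ => h.elim⟩⟩
    | @insert Y X _ _ ih =>
      obtain ⟨C, hC, hCs⟩ := ih
      by_cases hY : ∃ J, KF S n J ∧ F J ∧ extM S n J = Y
      · obtain ⟨J, hJ, hFJ, hJY⟩ := hY
        refine ⟨.disj C J, KF_disj hC hJ, fun M a => ⟨?_, ?_⟩⟩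
        · rintro (h | h)
          · obtain ⟨I, hI, hF, hm, hs⟩ := (hCs M a).1 h
            exact ⟨I, hI, hF, Or.inr hm, hs⟩
          · exact ⟨J, hJ, hFJ, Or.inl hJY, h⟩
        · rintro ⟨I, hI, hF, hm | hm, hs⟩
          · exact Or.inr ((msat_of_ext hI hJ (hm.trans hJY.symm) M a).1 hs)
          · exact Or.inl ((hCs M a).2 ⟨I, hI, hF, hm, hs⟩)
      · refine ⟨C, hC, fun M a => (hCs M a).trans ⟨?_, ?_⟩⟩
        · rintro ⟨I, hI, hF, hm, hs⟩
          exact ⟨I, hI, hF, Or.inr hm, hs⟩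
        · rintro ⟨I, hI, hF, hm | hm, hs⟩
          · exact (hY ⟨I, hI, hF, hm⟩).elim
          · exact ⟨I, hI, hF, hm, hs⟩
  obtain ⟨C, hC, h⟩ := key Set.univ Set.finite_univ
  exact ⟨C, hC, fun M a => by simpa using h M a⟩

/-- Depth-`n` preservation. -/
def Pres (S : Finset ℕ) (n : ℕ) (N P : Model) (a : N.U) (b : P.U) : Prop :=
  ∀ I, KF S n I → MSat N I a → MSat P I b

/-- The canonical asimulation on tuples. -/
def canA (S : Finset ℕ) (k : ℕ) (N P : Model) (l : List N.U) (l' : List P.U) : Prop :=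
  ∃ as a bs b, l = as ++ [a] ∧ l' = bs ++ [b] ∧ as.length = bs.length ∧
    Pres S (k - as.length) N P a b

theorem canA_snoc {S : Finset ℕ} {k : ℕ} {N P : Model} {as : List N.U} {bs : List P.U}
    {a : N.U} {b : P.U} : canA S k N P (as ++ [a]) (bs ++ [b]) ↔
      as.length = bs.length ∧ Pres S (k - as.length) N P a b := by
  constructor
  · rintro ⟨as', a', bs', b', h1, h2, h3, h4⟩
    obtain ⟨e1, e2⟩ := List.append_inj' h1 rfl
    obtain ⟨e3, e4⟩ := List.append_inj' h2 rfl
    cases e1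
    cases e2
    cases e3
    cases e4
    exact ⟨h3, h4⟩
  · rintro ⟨h1, h2⟩
    exact ⟨as, a, bs, b, rfl, rfl, h1, h2⟩

theorem canA_pair {S : Finset ℕ} {k : ℕ} {N P : Model} {as : List N.U} {bs : List P.U}
    {a c : N.U} {b d : P.U} (hl : as.length = bs.length)
    (h : Pres S (k - (as.length + 1)) N P c d) :
    canA S k N P (as ++ [a, c]) (bs ++ [b, d]) := by
  have e1 : as ++ [a, c] = (as ++ [a]) ++ [c] := by simp
  have e2 : bs ++ [b, d] = (bs ++ [b]) ++ [d] := by simp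
  rw [e1, e2, canA_snoc]
  simpa [hl] using h

theorem canA_type (S : Finset ℕ) (k : ℕ) (N P : Model) : TypeCond N P (canA S k N P) := by
  rintro _ _ ⟨as, a, bs, b, rfl, rfl, h, _⟩
  simp [h]

theorem canA_base (S : Finset ℕ) (k : ℕ) (N P : Model) :
    BaseCond N P (S : Set ℕ) (canA S k N P) := by
  intro as bs a b h n hn hp
  exact (canA_snoc.1 h).2 (.prop n) (KF_prop hn) hp

theorem canA_step (S : Finset ℕ) (k : ℕ) (N P : Model) :
    StepCond N P k (canA S k N P) (canA S k P N) := by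
  intro as bs a b d h hbd hk
  obtain ⟨hl, hp⟩ := canA_snoc.1 h
  have e : k - as.length = (k - (as.length + 1)) + 1 := by omega
  rw [e] at hp
  obtain ⟨C, hC, hCs⟩ := bigConj S (k - (as.length + 1)) (fun I => MSat P I d)
  obtain ⟨D, hD, hDs⟩ := bigDisj S (k - (as.length + 1)) (fun I => ¬ MSat P I d)
  have hn : ¬ MSat N (.impl C D) a := by
    intro ha
    obtain ⟨I, _, h1, h2⟩ :=
      (hDs P d).1 (hp _ (KF_impl hC hD) ha d hbd ((hCs P d).2 fun I _ h => h))
    exact h1 h2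
  simp only [MSat, not_forall] at hn
  obtain ⟨c, hac, hc1, hc2⟩ := hn
  refine ⟨c, hac, canA_pair hl ?_, canA_pair hl.symm ?_⟩
  · intro I hI hIc
    by_contra hId
    exact hc2 ((hDs N c).2 ⟨I, hI, hId, hIc⟩)
  · rw [← hl]
    intro I hI hId
    exact (hCs N c).1 hc1 I hI hId

theorem canA_box (S : Finset ℕ) (k : ℕ) (N P : Model) : Box1Cond N P k (canA S k N P) := by
  intro as bs a b d h hbd hk
  obtain ⟨hl, hp⟩ := canA_snoc.1 h
  have e : k - as.length = (k - (as.length + 1)) + 1 := by omega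
  rw [e] at hp
  obtain ⟨D, hD, hDs⟩ := bigDisj S (k - (as.length + 1)) (fun I => ¬ MSat P I d)
  have hn : ¬ MSat N (.box D) a := by
    intro ha
    obtain ⟨I, _, h1, h2⟩ := (hDs P d).1 (hp _ (KF_box hD) ha d hbd)
    exact h1 h2
  simp only [MSat, not_forall] at hn
  obtain ⟨c, hac, hc2⟩ := hn
  refine ⟨c, hac, canA_pair hl ?_⟩
  intro I hI hIc
  by_contra hId
  exact hc2 ((hDs N c).2 ⟨I, hI, hId, hIc⟩)

theorem canA_diam (S : Finset ℕ) (k : ℕ) (N P : Model) : Diam1Cond N P k (canA S k N P) := by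
  intro as bs a c b h hac hk
  obtain ⟨hl, hp⟩ := canA_snoc.1 h
  have e : k - as.length = (k - (as.length + 1)) + 1 := by omega
  rw [e] at hp
  obtain ⟨C, hC, hCs⟩ := bigConj S (k - (as.length + 1)) (fun I => MSat N I c)
  obtain ⟨d, hbd, hd⟩ := hp _ (KF_diam hC) ⟨c, hac, (hCs N c).2 fun I _ h => h⟩
  exact ⟨d, hbd, canA_pair hl fun I hI hIc => (hCs P d).1 hd I hI hIc⟩

/-- **Theorem 1, case (i,j) = (1,1).**  φ(x) is logically equivalent to the
(1,1)-standard x-translation of a modal intuitionistic formula iff there is a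
k ∈ ℕ such that φ(x) is invariant with respect to (1,1)-modal k-asimulations. -/
theorem statement_2 (x : ℕ) (φ : FOForm) (hfv : φ.freeVars ⊆ {x}) :
    (∃ I : MForm, Equiv φ (ST true true I x)) ↔
    (∃ k : ℕ, KInvariantD1 true x φ k) := by
  have hsat : ∀ (M : Model) (α : ℕ → M.U), SatAt M (α x) x φ ↔ Sat M φ α := by
    intro M α
    refine ⟨fun h => h α rfl, fun h β hβ => (sat_congr M φ α β fun v hv => ?_).1 h⟩
    have := hfv hv
    simp only [Finset.mem_singleton] at this
    subst this
    exact hβ.symm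
  constructor
  · rintro ⟨I, hI⟩
    have hcut : ∀ (M : Model) (α : ℕ → M.U),
        Sat M φ α ↔ MSat M (cutM φ.predLetters I) (α x) := fun M α =>
      (sat_restrict φ.predLetters M φ subset_rfl α).symm.trans
        ((hI (restrictModel φ.predLetters M) α).trans
          ((sat_ST (restrictModel φ.predLetters M) I x α).trans (msat_cut _ M I (α x))))
    refine ⟨mdepth I, ?_⟩
    intro Θ hΘ M₁ M₂ t u A B hAB a b hab ha
    obtain ⟨h1, h2, -, h3, h4, h5, h6, h7, h8, h9⟩ := hAB
    simp only [if_true] at h7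
    have ha' := (hcut M₁ (fun _ => a)).1 (ha _ rfl)
    have hb' := asim_preserve φ.predLetters Θ hΘ (mdepth I) I M₁ M₂ A B h1 h2 h3 h4 h5 h6
      h7.1 h7.2 h8 h9 [] [] a b hab (by simp) ha'
    intro α hα
    rw [hcut, hα]
    exact hb'
  · rintro ⟨k, hk⟩
    obtain ⟨D, hD, hDs⟩ := bigDisj φ.predLetters k
      (fun I => ∀ (M : Model) (a : M.U), MSat M I a → SatAt M a x φ)
    refine ⟨D, fun M α => ?_⟩
    rw [sat_ST, hDs, ← hsat]
    constructor
    · intro h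
      obtain ⟨C, hC, hCs⟩ := bigConj φ.predLetters k (fun I => MSat M I (α x))
      refine ⟨C, hC, ?_, (hCs M (α x)).2 fun I _ h => h⟩
      intro N b hb
      have hA : canA φ.predLetters k M N [α x] [b] :=
        ⟨[], α x, [], b, rfl, rfl, rfl, fun I hI hIa => (hCs N b).1 hb I hI hIa⟩
      refine hk (φ.predLetters : Set ℕ) subset_rfl M N (α x) b (canA φ.predLetters k M N)
        (canA φ.predLetters k N M) ?_ (α x) b hA h
      refine ⟨canA_type _ _ _ _, canA_type _ _ _ _, hA, canA_base _ _ _ _, canA_base _ _ _ _,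
        canA_step _ _ _ _, canA_step _ _ _ _, ?_, canA_diam _ _ _ _, canA_diam _ _ _ _⟩
      simp only [if_true]
      exact ⟨canA_box _ _ _ _, canA_box _ _ _ _⟩
    · rintro ⟨I, _, h, hs⟩
      exact h M (α x) hs

end ModalIntAsim
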